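/- Let β > 1, let U be a finite universe of n ≥ 1 elements, let F be a finite family of subsets of U, and let lev assign a natural-number level lev(e) to each element e ∈ U such that for every s ∈ F and every natural number j ≤ log_β n one has |{e ∈ s : lev(e) < j}| < β^{j+1}. Then for every s ∈ F, Σ_{e ∈ s} β^{-lev(e)} ≤ β²·H_{|s|} ≤ β²·(ln n + 1), where H_x denotes the x-th harmonic number. -/

import Mathlib

/-!
Let the rank of `e ∈ s` be the number of elements of `s` whose level is at most `lev e`. The
counting hypothesis at `lev e + 1` bounds this rank by `β ^ (lev e + 2)`, so `β ^ (-lev e)` is at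
most `β ^ 2` divided by the rank of `e`, and the reciprocal ranks sum to at most the harmonic number
of `|s|`. Levels above `log_β n` satisfy the counting bound for free, since there `|s| ≤ n < β ^ j`.
-/

theorem card_filter_le_pos {α ι : Type*} [Preorder ι] [DecidableLE ι] (key : α → ι) {s : Finset α}
    {a : α} (ha : a ∈ s) :
    0 < (s.filter (fun e => key e ≤ key a)).card :=
  Finset.card_pos.mpr ⟨a, Finset.mem_filter.mpr ⟨ha, le_rfl⟩⟩

section Rank

variable {α ι : Type*} [LinearOrder ι]

theorem sum_inv_card_filter_le_le_harmonic (key : α → ι) (s : Finset α) :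
    ∑ a ∈ s, ((s.filter (fun e => key e ≤ key a)).card : ℚ)⁻¹ ≤ harmonic s.card := by
  classical
  induction s using Finset.induction_on_max_value key with
  | empty => simp
  | insert a s ha hmax ih =>
    have rank_max : (insert a s).filter (fun e => key e ≤ key a) = insert a s :=
      Finset.filter_true_of_mem <| (Finset.forall_mem_insert _ _ _).mpr ⟨le_rfl, hmax⟩
    have inv_rank_le : ∀ b ∈ s,
        (((insert a s).filter (fun e => key e ≤ key b)).card : ℚ)⁻¹ ≤
          ((s.filter (fun e => key e ≤ key b)).card : ℚ)⁻¹ := fun b hb => by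
      have rank_pos := card_filter_le_pos key hb
      gcongr
      exact Finset.subset_insert a s
    rw [Finset.sum_insert ha, rank_max, Finset.card_insert_of_notMem ha, harmonic_succ, add_comm]
    gcongr
    exact (Finset.sum_le_sum inv_rank_le).trans ih

theorem sum_le_mul_harmonic_of_le_div_card_filter_le {K : Type*} [Field K] [LinearOrder K]
    [IsStrictOrderedRing K] {f : α → K} {C : K} (hC : 0 ≤ C) (key : α → ι) (s : Finset α)
    (hf : ∀ a ∈ s, f a ≤ C / (s.filter (fun e => key e ≤ key a)).card) :
    ∑ a ∈ s, f a ≤ C * (harmonic s.card : K) :=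
  calc ∑ a ∈ s, f a
      ≤ ∑ a ∈ s, C * (((s.filter (fun e => key e ≤ key a)).card : ℚ)⁻¹ : ℚ) :=
        Finset.sum_le_sum fun a ha => by simpa [div_eq_mul_inv] using hf a ha
    _ = C * ((∑ a ∈ s, ((s.filter (fun e => key e ≤ key a)).card : ℚ)⁻¹ : ℚ) : K) := by
        rw [Rat.cast_sum, Finset.mul_sum]
    _ ≤ C * (harmonic s.card : K) := by
        gcongr
        exact sum_inv_card_filter_le_le_harmonic key s

end Rank

theorem sum_zpow_neg_le_mul_harmonic {α K : Type*} [Field K] [LinearOrder K]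
    [IsStrictOrderedRing K] {β C : K} (hβ : 0 < β) (lev : α → ℕ) (s : Finset α)
    (hcount : ∀ j : ℕ, ((s.filter (fun e => lev e ≤ j)).card : K) ≤ C * β ^ j) :
    ∑ e ∈ s, β ^ (-(lev e : ℤ)) ≤ C * (harmonic s.card : K) := by
  have hC : 0 ≤ C := (Nat.cast_nonneg _).trans (by simpa using hcount 0)
  refine sum_le_mul_harmonic_of_le_div_card_filter_le hC lev s fun a ha => ?_
  rw [zpow_neg, zpow_natCast, le_div_iff₀ (by exact_mod_cast card_filter_le_pos lev ha),
    inv_mul_le_iff₀ (by positivity), mul_comm]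
  exact hcount (lev a)

theorem card_filter_lt_le_pow_of_le_logb {α : Type*} {β : ℝ} (hβ : 1 < β) {n : ℕ} (hn : 0 < n)
    (lev : α → ℕ) {s : Finset α} (hs : s.card ≤ n)
    (hcount : ∀ j : ℕ, (j : ℝ) ≤ Real.logb β n →
      ((s.filter (fun e => lev e < j)).card : ℝ) ≤ β ^ (j + 1)) (j : ℕ) :
    ((s.filter (fun e => lev e < j)).card : ℝ) ≤ β ^ (j + 1) := by
  rcases le_or_gt (j : ℝ) (Real.logb β n) with hj | hj
  · exact hcount j hj
  · rw [Real.logb_lt_iff_lt_rpow hβ (by exact_mod_cast hn), Real.rpow_natCast] at hj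
    calc ((s.filter (fun e => lev e < j)).card : ℝ)
        ≤ n := by exact_mod_cast (Finset.card_filter_le _ _).trans hs
      _ ≤ β ^ j := hj.le
      _ ≤ β ^ (j + 1) := pow_le_pow_right₀ hβ.le j.le_succ

theorem monotone_harmonic : Monotone harmonic :=
  monotone_nat_of_le_succ fun n => by
    rw [harmonic_succ]
    exact le_add_of_nonneg_right (by positivity)

theorem ratCast_harmonic_eq_sum_one_div (K : Type*) [DivisionRing K] [CharZero K] (n : ℕ) :
    (harmonic n : K) = ∑ i ∈ Finset.range n, (1 : K) / (i + 1) := by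
  simp [harmonic]

/-- Let `β > 1`, `U` a finite universe of `n ≥ 1` elements, `F` a finite
family of subsets of `U`, and `lev : α → ℕ` a level function such that for every `s ∈ F`
and every natural `j ≤ log_β n`, `|{e ∈ s : lev e < j}| < β ^ (j + 1)` (the relaxed
no-PD property). Then for every `s ∈ F`,
`∑_{e ∈ s} β ^ (-lev e) ≤ β² · H_{|s|} ≤ β² · (ln n + 1)`, where `H_x` denotes the
`x`-th harmonic number. -/
theorem stmt_9 {α : Type*} [DecidableEq α] (β : ℝ) (hβ : 1 < β)
    (U : Finset α) (F : Finset (Finset α)) (hn : 1 ≤ U.card)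
    (hF : ∀ s ∈ F, s ⊆ U)
    (lev : α → ℕ)
    (h2 : ∀ s ∈ F, ∀ j : ℕ, (j : ℝ) ≤ Real.logb β (U.card : ℝ) →
      ((s.filter (fun e => lev e < j)).card : ℝ) < β ^ (j + 1)) :
    ∀ s ∈ F,
      (∑ e ∈ s, β ^ (-(lev e : ℤ)) ≤ β ^ 2 * ∑ i ∈ Finset.range s.card, (1 : ℝ) / (i + 1)) ∧
      (β ^ 2 * ∑ i ∈ Finset.range s.card, (1 : ℝ) / (i + 1)
        ≤ β ^ 2 * (Real.log (U.card : ℝ) + 1)) := by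
  intro s hs
  have hsU : s.card ≤ U.card := Finset.card_le_card (hF s hs)
  have hcount (j : ℕ) : ((s.filter (fun e => lev e ≤ j)).card : ℝ) ≤ β ^ 2 * β ^ j := by
    have hlt := card_filter_lt_le_pow_of_le_logb hβ hn lev hsU
      (fun i hi => (h2 s hs i hi).le) (j + 1)
    rw [← pow_add, add_comm]
    simpa only [Nat.lt_succ_iff] using hlt
  rw [← ratCast_harmonic_eq_sum_one_div ℝ]
  refine ⟨sum_zpow_neg_le_mul_harmonic (by positivity) lev s hcount, ?_⟩
  gcongr
  calc (harmonic s.card : ℝ)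
      ≤ harmonic U.card := by exact_mod_cast monotone_harmonic hsU
    _ ≤ Real.log U.card + 1 := by simpa only [add_comm] using harmonic_le_one_add_log U.card
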